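/- Let λ ≥ 2 be an integer and let (z, y) with z : V → {0,1}, y : E → {0,1} satisfy the design constraints of (HLPLF-λ). Then for every nonempty subset S ⊂ V with |S| ≤ λ − 1 and every k ∈ S, the inequality y(δ(S)) + y_{kk} ≥ λ z_k holds. That is, the strengthened connectivity constraints are valid for (HLPLF-λ) on all subsets of cardinality at most λ − 1. -/

import Mathlib

open Finset

/-- The cut-set `δ(S)`: the set of (non-loop) edges with one endpoint in `S` and the other
outside `S`. -/
def cutset {V : Type*} [Fintype V] [DecidableEq V] (S : Finset V) : Finset (Sym2 V) :=
  Finset.univ.filter (fun e : Sym2 V => ∃ k l : V, k ∈ S ∧ l ∉ S ∧ e = s(k, l))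

/-- `y(δ(S))`: the number of activated hub edges in the cut-set of `S` (relative to the
indicator vector `y`). -/
def cutVal {V : Type*} [Fintype V] [DecidableEq V] (y : Sym2 V → ℝ) (S : Finset V) : ℝ :=
  ∑ e ∈ cutset S, y e

/-!
The sum `y(δ({k})) + y_{kk}` is the total activation of the edges at `k`, loop included. If
`z_k = 1` it is at least `λ > |S|`, while the edges from `k` into `S` carry at most `|S|`, so some
edge with positive activation joins `k` to a node `l ∉ S`. Then `l` is a hub, and the connectivity
constraint for `S`, `k` and `l` is the strengthened one.
-/

theorem exists_notMem_pos_of_card_nsmul_lt_sum {ι M : Type*} [Fintype ι] [AddCommMonoid M]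
    [LinearOrder M] [IsOrderedAddMonoid M] {f : ι → M} {c : M} {S : Finset ι}
    (hf : ∀ i ∈ S, f i ≤ c) (hS : #S • c < ∑ i, f i) : ∃ i ∉ S, 0 < f i := by
  classical
  by_contra! hout
  refine hS.not_ge ?_
  calc ∑ i, f i = ∑ i ∈ S, f i + ∑ i ∈ Sᶜ, f i := (sum_add_sum_compl S f).symm
    _ ≤ #S • c + 0 := add_le_add (sum_le_card_nsmul S f c hf)
        (sum_nonpos fun i hi => hout i (mem_compl.mp hi))
    _ = #S • c := add_zero _

section Cut

variable {V : Type*} [Fintype V] [DecidableEq V] {z : V → ℝ} {y : Sym2 V → ℝ}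

theorem cutVal_nonneg (hy : ∀ e, 0 ≤ y e) (S : Finset V) : 0 ≤ cutVal y S :=
  sum_nonneg fun e _ => hy e

theorem cutset_singleton (k : V) : cutset {k} = ({k}ᶜ : Finset V).image fun l => s(k, l) := by
  ext e
  simp [cutset, eq_comm]

theorem cutVal_singleton_add_loop (y : Sym2 V → ℝ) (k : V) :
    cutVal y {k} + y s(k, k) = ∑ l, y s(k, l) := by
  have hinj : Function.Injective fun l : V => s(k, l) := fun _ _ => Sym2.congr_right.mp
  rw [cutVal, cutset_singleton, sum_image hinj.injOn, Fintype.sum_eq_sum_compl_add k]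

theorem exists_notMem_eq_one_of_card_lt {S : Finset V} {k : V}
    (hz : ∀ l, z l = 0 ∨ z l = 1) (hy : ∀ e, y e ≤ 1) (hyz : ∀ l, y s(k, l) ≤ z l)
    (hS : (#S : ℝ) < cutVal y {k} + y s(k, k)) : ∃ l ∉ S, z l = 1 := by
  rw [cutVal_singleton_add_loop, ← nsmul_one] at hS
  obtain ⟨l, hl, hpos⟩ := exists_notMem_pos_of_card_nsmul_lt_sum (fun l _ => hy s(k, l)) hS
  exact ⟨l, hl, (hz l).resolve_left (hpos.trans_le (hyz l)).ne'⟩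

theorem strengthened_connectivity_valid_general {lam : ℝ}
    (hz : ∀ k, z k = 0 ∨ z k = 1) (hy : ∀ e, 0 ≤ y e ∧ y e ≤ 1)
    (hyz : ∀ k l, y s(k, l) ≤ z l)
    (hcut : ∀ S : Finset V, 2 ≤ #S → ∀ k ∈ S, ∀ l ∉ S,
      lam * (z k + z l - 1) ≤ cutVal y S + y s(k, k))
    (hsingle : ∀ k, lam * z k ≤ cutVal y {k} + y s(k, k))
    {S : Finset V} (hcard : (#S : ℝ) < lam) {k : V} (hk : k ∈ S) :
    lam * z k ≤ cutVal y S + y s(k, k) := by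
  obtain rfl | hS := eq_singleton_or_nontrivial hk
  · exact hsingle k
  obtain hzk | hzk := hz k
  · rw [hzk, mul_zero]
    exact add_nonneg (cutVal_nonneg (fun e => (hy e).1) S) (hy _).1
  · have hdeg : (#S : ℝ) < cutVal y {k} + y s(k, k) :=
      hcard.trans_le (by simpa only [hzk, mul_one] using hsingle k)
    obtain ⟨l, hl, hzl⟩ :=
      exists_notMem_eq_one_of_card_lt hz (fun e => (hy e).2) (hyz k) hdeg
    simpa only [hzl, add_sub_cancel_right] using
      hcut S (one_lt_card_iff_nontrivial.mpr hS) k hk l hl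

end Cut

/-- For any design `(z, y)` satisfying the design constraints of (HLPLF-λ), the
strengthened connectivity constraints `y(δ(S)) + y_{kk} ≥ λ z_k` are valid for every
nonempty proper subset `S ⊂ V` with `|S| ≤ λ − 1` and every `k ∈ S`. -/
theorem strengthened_connectivity_valid
    {V : Type*} [Fintype V] [DecidableEq V]
    (lam : ℤ) (hlam : 2 ≤ lam)
    (z : V → ℝ) (y : Sym2 V → ℝ)
    (hz : ∀ k : V, z k = 0 ∨ z k = 1)
    (hy : ∀ e : Sym2 V, y e = 0 ∨ y e = 1)
    (hyz : ∀ k l : V, y s(k, l) ≤ z k ∧ y s(k, l) ≤ z l)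
    (hcut : ∀ S : Finset V, 2 ≤ S.card → ∀ k ∈ S, ∀ l ∉ S,
        (lam : ℝ) * (z k + z l - 1) ≤ cutVal y S + y s(k, k))
    (hsingle : ∀ k : V, (lam : ℝ) * z k ≤ cutVal y {k} + y s(k, k))
    (S : Finset V) (hSne : S.Nonempty) (hSproper : S ≠ Finset.univ)
    (hcard : (S.card : ℤ) ≤ lam - 1) :
    ∀ k ∈ S, (lam : ℝ) * z k ≤ cutVal y S + y s(k, k) :=
  fun _ hk => strengthened_connectivity_valid_general hz
    (fun e => by obtain h | h := hy e <;> simp [h]) (fun k l => (hyz k l).2) hcut hsingle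
    (by exact_mod_cast Int.lt_of_le_sub_one hcard) hk
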